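/- arXiv:math/9710222 — 3 statements merged into one kernel-verified Lean document; each statement's English description precedes it below -/
import Mathlib

section
/- Let F be a field complete with respect to a nontrivial nonarchimedean absolute value, let Ω be a fixed algebraic closure of F equipped with the spectral norm (the unique absolute value extending that of F), and let F₁ ⊆ Ω be a finite extension of F. Let (cₙ)_{n≥1} be a sequence in F₁ such that for every real C > 0 one has |cₙ|·Cⁿ → 0 as n → ∞ (so that f(x) = 1 + Σ_{n≥1} cₙ xⁿ is an entire power series), and for α ∈ Ω let f(α) denote the limit of the partial sums 1 + Σ_{n≤N} cₙ αⁿ, which exists in the complete field F₁(α). Let Z = {α ∈ Ω : f(α) = 0} be the set of zeroes of f. Then the intermediate field F((cₙ)_{n≥1}) generated over F by the coefficients of f is contained in the intermediate field F(Z) generated over F by the zeroes of f. -/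
open Filter

/-!
Fix a radius `R`. Conjugate elements over `F₁` have equal norms, so each partial sum of `f` factors
over `F₁` as `P_N * U_N`, with the roots of `P_N` inside the disc of radius `R` and those of `U_N`
outside. Weierstrass division is contracting for the Gauss norm of radius `R`, so `P_N` converges,
as `f` does, to a polynomial `P` over `F₁`. Its roots are zeroes of `f`, whence its coefficients lie
in `F(Z)`, and they differ from those of `f` by at most a constant times `1 / R`. Letting `R` tend
to infinity, the coefficients of `f` are limits of elements of `F₁ ∩ F(Z)`, which is
finite-dimensional over the complete field `F` and hence closed.
-/

open Polynomial
open scoped Topology PowerSeries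

/-- The Gauss norm `max ‖aᵢ‖ Rⁱ` of radius `R` of a polynomial `∑ aᵢ Xⁱ` over a normed field. -/
noncomputable def discNorm {K : Type*} [NormedField K] (R : ℝ) (P : K[X]) : ℝ :=
  P.gaussNorm (NormedField.toAbsoluteValue K) R

section DiscNorm

variable {K : Type*} [NormedField K] {R S b : ℝ} {P Q : K[X]}

lemma exists_discNorm_eq (R : ℝ) (P : K[X]) : ∃ i, discNorm R P = ‖P.coeff i‖ * R ^ i :=
  exists_eq_gaussNorm (NormedField.toAbsoluteValue K) R P

lemma norm_coeff_mul_pow_le_discNorm (hR : 0 ≤ R) (P : K[X]) (i : ℕ) :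
    ‖P.coeff i‖ * R ^ i ≤ discNorm R P :=
  le_gaussNorm (NormedField.toAbsoluteValue K) P hR i

lemma discNorm_nonneg (hR : 0 ≤ R) (P : K[X]) : 0 ≤ discNorm R P :=
  gaussNorm_nonneg (NormedField.toAbsoluteValue K) P hR

lemma discNorm_le_iff (hR : 0 ≤ R) : discNorm R P ≤ b ↔ ∀ i, ‖P.coeff i‖ * R ^ i ≤ b := by
  refine ⟨fun h i => (norm_coeff_mul_pow_le_discNorm hR P i).trans h, fun h => ?_⟩
  obtain ⟨i, hi⟩ := exists_discNorm_eq R P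
  exact hi.trans_le (h i)

@[simp]
lemma discNorm_monomial (R : ℝ) (n : ℕ) (a : K) : discNorm R (monomial n a) = ‖a‖ * R ^ n :=
  gaussNorm_monomial (NormedField.toAbsoluteValue K) R n a

@[simp]
lemma discNorm_C (R : ℝ) (a : K) : discNorm R (C a) = ‖a‖ :=
  gaussNorm_C (NormedField.toAbsoluteValue K) R a

@[simp]
lemma discNorm_one (R : ℝ) : discNorm R (1 : K[X]) = 1 := by
  simpa using discNorm_C R (1 : K)

lemma one_le_discNorm (hR : 0 ≤ R) (hP : P.coeff 0 = 1) : 1 ≤ discNorm R P := by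
  simpa [hP] using norm_coeff_mul_pow_le_discNorm hR P 0

lemma discNorm_eq_of_norm_coeff_eq {E : Type*} [NormedField E] {T : E[X]} (hR : 0 ≤ R)
    (h : ∀ i, ‖P.coeff i‖ = ‖T.coeff i‖) : discNorm R P = discNorm R T := by
  refine le_antisymm ((discNorm_le_iff hR).2 fun i => ?_) ((discNorm_le_iff hR).2 fun i => ?_)
  · exact (h i).symm ▸ norm_coeff_mul_pow_le_discNorm hR T i
  · exact h i ▸ norm_coeff_mul_pow_le_discNorm hR P i

lemma discNorm_sub_comm (hR : 0 ≤ R) (P Q : K[X]) : discNorm R (P - Q) = discNorm R (Q - P) :=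
  discNorm_eq_of_norm_coeff_eq hR fun i => by rw [coeff_sub, coeff_sub, norm_sub_rev]

lemma discNorm_map_algebraMap {E : Type*} [NormedField E] [NormedAlgebra E K] (hR : 0 ≤ R)
    (P : E[X]) : discNorm R (P.map (algebraMap E K)) = discNorm R P :=
  discNorm_eq_of_norm_coeff_eq hR fun i => by rw [coeff_map, norm_algebraMap']

lemma discNorm_le_div_mul_discNorm (hS : 0 ≤ S) (hSR : S ≤ R) (hR : 0 < R) (hP : P.coeff 0 = 0) :
    discNorm S P ≤ S / R * discNorm R P := by
  refine (discNorm_le_iff hS).2 fun i => ?_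
  rcases i with _ | i
  · have := discNorm_nonneg hR.le P
    simpa only [hP, norm_zero, zero_mul] using by positivity
  · calc ‖P.coeff (i + 1)‖ * S ^ (i + 1)
        = S / R * (‖P.coeff (i + 1)‖ * (S ^ i * R)) := by field_simp; ring
      _ ≤ S / R * (‖P.coeff (i + 1)‖ * (R ^ i * R)) := by gcongr
      _ ≤ S / R * discNorm R P := by
        rw [← pow_succ]
        gcongr
        exact norm_coeff_mul_pow_le_discNorm hR.le P _

variable [IsUltrametricDist K]

lemma discNorm_add_le_max (hR : 0 ≤ R) (P Q : K[X]) :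
    discNorm R (P + Q) ≤ max (discNorm R P) (discNorm R Q) :=
  isNonarchimedean_gaussNorm (NormedField.toAbsoluteValue K)
    IsUltrametricDist.isNonarchimedean_norm hR P Q

lemma discNorm_sub_le_max (hR : 0 ≤ R) (P Q : K[X]) :
    discNorm R (P - Q) ≤ max (discNorm R P) (discNorm R Q) := by
  have hneg : discNorm R (-Q) = discNorm R Q := by
    simpa only [zero_sub, sub_zero] using discNorm_sub_comm hR 0 Q
  rw [sub_eq_add_neg, ← hneg]
  exact discNorm_add_le_max hR P (-Q)

lemma discNorm_mul (hR : 0 < R) (P Q : K[X]) :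
    discNorm R (P * Q) = discNorm R P * discNorm R Q :=
  gaussNorm_mul (v := NormedField.toAbsoluteValue K)
    IsUltrametricDist.isNonarchimedean_norm hR P Q

lemma discNorm_X_sub_C (hR : 0 ≤ R) (a : K) : discNorm R (X - C a) = max R ‖a‖ := by
  refine le_antisymm ?_ (max_le ?_ ?_)
  · simpa [← monomial_one_one_eq_X] using discNorm_sub_le_max hR X (C a)
  · calc R = ‖(X - C a).coeff 1‖ * R ^ 1 := by simp [coeff_X]
      _ ≤ discNorm R (X - C a) := norm_coeff_mul_pow_le_discNorm hR _ 1
  · calc ‖a‖ = ‖(X - C a).coeff 0‖ * R ^ 0 := by simp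
      _ ≤ discNorm R (X - C a) := norm_coeff_mul_pow_le_discNorm hR _ 0

lemma norm_eval_le_discNorm {x : K} (hx : ‖x‖ ≤ R) (P : K[X]) : ‖P.eval x‖ ≤ discNorm R P := by
  have hR : 0 ≤ R := (norm_nonneg x).trans hx
  rw [eval_eq_sum_range]
  refine IsUltrametricDist.norm_sum_le_of_forall_le_of_nonneg (discNorm_nonneg hR P) fun i _ => ?_
  rw [norm_mul, norm_pow]
  refine le_trans ?_ (norm_coeff_mul_pow_le_discNorm hR P i)
  gcongr

lemma norm_aeval_le_discNorm {E : Type*} [NormedField E] [NormedAlgebra E K] {x : K} (hx : ‖x‖ ≤ R)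
    (P : E[X]) : ‖aeval x P‖ ≤ discNorm R P := by
  rw [← discNorm_map_algebraMap (K := K) ((norm_nonneg x).trans hx), ← eval_map_algebraMap]
  exact norm_eval_le_discNorm hx _

lemma discNorm_eq_of_splits (hR : 0 < R) (hP : P.Splits) :
    discNorm R P = ‖P.leadingCoeff‖ * (P.roots.map fun r => max R ‖r‖).prod := by
  have hprod (s : Multiset K) :
      discNorm R (s.map fun r => X - C r).prod = (s.map fun r => max R ‖r‖).prod := by
    induction s using Multiset.induction_on with
    | empty => simp
    | cons r s ih => simp [discNorm_mul hR, discNorm_X_sub_C hR.le, ih]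
  conv_lhs => rw [hP.eq_prod_roots, discNorm_mul hR, discNorm_C, hprod]

lemma discNorm_eq_norm_coeff_zero (hR : 0 < R) (hP : P.Splits)
    (hroots : ∀ r ∈ P.roots, R ≤ ‖r‖) :
    discNorm R P = ‖P.coeff 0‖ := by
  rw [discNorm_eq_of_splits hR hP, hP.coeff_zero_eq_leadingCoeff_mul_prod_roots,
    Multiset.map_congr rfl fun r hr => max_eq_right (hroots r hr)]
  have hnorm : (P.roots.map norm).prod = ‖P.roots.prod‖ :=
    (map_multiset_prod (normHom : K →*₀ ℝ) P.roots).symm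
  simp [hnorm]

/- There is `S > R` such that no root lies in the open disc of radius `S`, so the Gauss norm of `P`
for `S` is still `1`, and passing from `S` to `R` gains the factor `R / S < 1`. -/
lemma discNorm_sub_one_lt_one (hR : 0 < R) (hP : P.Splits) (hP0 : P.coeff 0 = 1)
    (hroots : ∀ r ∈ P.roots, R < ‖r‖) : discNorm R (P - 1) < 1 := by
  classical
  obtain ⟨S, hS, hRS⟩ : ∃ S, (∀ r ∈ P.roots.toFinset, S ≤ ‖r‖) ∧ R < S := by
    have h : ∀ᶠ S in 𝓝[>] R, ∀ r ∈ P.roots.toFinset, S ≤ ‖r‖ :=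
      (eventually_all_finset _).2 fun r hr => mem_nhdsWithin_of_mem_nhds
        (Iic_mem_nhds (hroots r (Multiset.mem_toFinset.1 hr)))
    exact (h.and self_mem_nhdsWithin).exists
  have hS0 : 0 < S := hR.trans hRS
  have hPS : discNorm S P = 1 := by
    rw [discNorm_eq_norm_coeff_zero hS0 hP fun r hr => hS r (Multiset.mem_toFinset.2 hr), hP0,
      norm_one]
  calc discNorm R (P - 1)
      ≤ R / S * discNorm S (P - 1) :=
        discNorm_le_div_mul_discNorm hR.le hRS.le hS0 (by simp [hP0])
    _ ≤ R / S * 1 := by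
        gcongr
        simpa [hPS] using discNorm_sub_le_max hS0.le P 1
    _ < 1 := by rwa [mul_one, div_lt_one hS0]

lemma discNorm_eq_one (hR : 0 ≤ R) (hP0 : P.coeff 0 = 1) (h : discNorm R (P - 1) ≤ 1) :
    discNorm R P = 1 := by
  refine le_antisymm ?_ (one_le_discNorm hR hP0)
  calc discNorm R P = discNorm R (P - 1 + 1) := by rw [sub_add_cancel]
    _ ≤ max (discNorm R (P - 1)) (discNorm R 1) := discNorm_add_le_max hR (P - 1) 1
    _ ≤ 1 := by rw [discNorm_one]; exact max_le h le_rfl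

end DiscNorm

/-- A polynomial is distinguished for the radius `R` if its Gauss norm is attained at its leading
coefficient. Over an ultrametric field, for `P ≠ 0` and `R > 0`, this means that all roots of `P` in
an algebraic closure lie in the closed disc of radius `R`. -/
def IsDistinguished {K : Type*} [NormedField K] (R : ℝ) (P : K[X]) : Prop :=
  discNorm R P = ‖P.leadingCoeff‖ * R ^ P.natDegree

namespace IsDistinguished

variable {K : Type*} [NormedField K] {R : ℝ} {P Q : K[X]}

lemma map_algebraMap_iff {E : Type*} [NormedField E] [NormedAlgebra E K] (hR : 0 ≤ R) {P : E[X]} :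
    IsDistinguished R (P.map (algebraMap E K)) ↔ IsDistinguished R P := by
  rw [IsDistinguished, IsDistinguished, discNorm_map_algebraMap hR, leadingCoeff_map, natDegree_map,
    norm_algebraMap']

lemma natDegree_le_of_discNorm_sub_lt (hR : 0 ≤ R) (hP : IsDistinguished R P)
    (h : discNorm R (P - Q) < discNorm R P) : P.natDegree ≤ Q.natDegree := by
  by_contra! hdeg
  refine h.not_ge ?_
  rw [hP]
  simpa [coeff_eq_zero_of_natDegree_lt hdeg] using
    norm_coeff_mul_pow_le_discNorm hR (P - Q) P.natDegree

variable [IsUltrametricDist K]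

lemma of_discNorm_sub_lt (hR : 0 ≤ R) (hP : IsDistinguished R P)
    (h : discNorm R (P - Q) < discNorm R P) (hdeg : Q.natDegree ≤ P.natDegree) :
    IsDistinguished R Q := by
  have hdeg' : Q.natDegree = P.natDegree :=
    hdeg.antisymm (hP.natDegree_le_of_discNorm_sub_lt hR h)
  have hle : discNorm R Q ≤ discNorm R P := by
    simpa [h.le] using discNorm_sub_le_max hR P (P - Q)
  refine le_antisymm (hle.trans ?_) (norm_coeff_mul_pow_le_discNorm hR Q _)
  have hlead : discNorm R P ≤
      max (discNorm R (P - Q)) (‖Q.leadingCoeff‖ * R ^ Q.natDegree) := by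
    calc discNorm R P = ‖(P - Q).coeff P.natDegree + Q.coeff P.natDegree‖ * R ^ P.natDegree := by
          rw [coeff_sub, sub_add_cancel, hP, leadingCoeff]
      _ ≤ max ‖(P - Q).coeff P.natDegree‖ ‖Q.coeff P.natDegree‖ * R ^ P.natDegree := by
          gcongr
          exact IsUltrametricDist.norm_add_le_max _ _
      _ ≤ _ := by
          rw [max_mul_of_nonneg _ _ (by positivity), leadingCoeff, hdeg']
          exact max_le_max_right _ (norm_coeff_mul_pow_le_discNorm hR _ _)
  exact (le_max_iff.1 hlead).resolve_left h.not_ge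

lemma of_forall_norm_roots_le (hR : 0 < R) (hP : P.Splits) (hroots : ∀ r ∈ P.roots, ‖r‖ ≤ R) :
    IsDistinguished R P := by
  rw [IsDistinguished, discNorm_eq_of_splits hR hP,
    Multiset.map_congr rfl fun r hr => max_eq_left (hroots r hr)]
  simp [hP.natDegree_eq_card_roots]

lemma norm_le_of_isRoot (hR : 0 < R) (hP : IsDistinguished R P) (hP0 : P ≠ 0) {a : K}
    (ha : P.IsRoot a) : ‖a‖ ≤ R := by
  obtain ⟨Q, rfl⟩ := dvd_iff_isRoot.2 ha
  have hQ0 : Q ≠ 0 := right_ne_zero_of_mul hP0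
  have hpos : 0 < ‖Q.leadingCoeff‖ * R ^ Q.natDegree :=
    mul_pos (norm_pos_iff.2 (leadingCoeff_ne_zero.2 hQ0)) (pow_pos hR _)
  refine (le_max_right R ‖a‖).trans (le_of_mul_le_mul_right ?_ hpos)
  calc max R ‖a‖ * (‖Q.leadingCoeff‖ * R ^ Q.natDegree)
      ≤ max R ‖a‖ * discNorm R Q := by
        gcongr
        exact norm_coeff_mul_pow_le_discNorm hR.le Q _
    _ = ‖((X - C a) * Q).leadingCoeff‖ * R ^ ((X - C a) * Q).natDegree := by
        rw [← hP, discNorm_mul hR, discNorm_X_sub_C hR.le]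
    _ = R * (‖Q.leadingCoeff‖ * R ^ Q.natDegree) := by
        rw [natDegree_mul (X_sub_C_ne_zero a) hQ0, natDegree_X_sub_C, leadingCoeff_mul,
          leadingCoeff_X_sub_C, one_mul, pow_add, pow_one, mul_left_comm]

lemma X_mul (hR : 0 < R) (hP : IsDistinguished R P) : IsDistinguished R (X * P) := by
  rcases eq_or_ne P 0 with rfl | hP0
  · simpa using hP
  rw [IsDistinguished, discNorm_mul hR, hP, ← monomial_one_one_eq_X, discNorm_monomial,
    monomial_one_one_eq_X, natDegree_X_mul hP0, leadingCoeff_mul, leadingCoeff_X, norm_one, one_mul,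
    one_mul, pow_one, pow_succ']
  ring

lemma discNorm_mul_le_discNorm_mul_add (hR : 0 < R) (hP : IsDistinguished R P) {B : K[X]}
    (hB : B.natDegree < P.natDegree) (A : K[X]) :
    discNorm R (P * A) ≤ discNorm R (P * A + B) := by
  induction hn : A.support.card generalizing A with
  | zero =>
    rw [card_support_eq_zero.1 hn, mul_zero, ← C_0, discNorm_C, norm_zero]
    exact discNorm_nonneg hR.le _
  | succ n ih =>
    set T := monomial A.natDegree A.leadingCoeff
    have hA : P * A = P * A.eraseLead + P * T := by
      rw [← mul_add, eraseLead_add_monomial_natDegree_leadingCoeff]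
    have hcoeff : (P * A + B).coeff (P.natDegree + A.natDegree) =
        P.leadingCoeff * A.leadingCoeff := by
      rw [coeff_add, coeff_mul_degree_add_degree, coeff_eq_zero_of_natDegree_lt (p := B) (by omega),
        add_zero]
    have hT : discNorm R (P * T) ≤ discNorm R (P * A + B) := by
      calc discNorm R (P * T)
          = ‖P.leadingCoeff * A.leadingCoeff‖ * R ^ (P.natDegree + A.natDegree) := by
            rw [discNorm_mul hR, hP, discNorm_monomial, norm_mul, pow_add]
            ring
        _ ≤ discNorm R (P * A + B) := hcoeff ▸ norm_coeff_mul_pow_le_discNorm hR.le (P * A + B) _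
    have hE : discNorm R (P * A.eraseLead) ≤ discNorm R (P * A + B) := by
      calc discNorm R (P * A.eraseLead)
          ≤ discNorm R (P * A.eraseLead + B) := ih A.eraseLead (card_support_eraseLead' hn)
        _ = discNorm R (P * A + B - P * T) := by rw [hA]; congr 1; ring
        _ ≤ discNorm R (P * A + B) := (discNorm_sub_le_max hR.le _ _).trans (max_le le_rfl hT)
    rw [hA] at hE hT ⊢
    exact (discNorm_add_le_max hR.le _ _).trans (max_le hE hT)

lemma discNorm_le_discNorm_mul_add (hR : 0 < R) (hP : IsDistinguished R P) {B : K[X]}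
    (hB : B.natDegree < P.natDegree) (A : K[X]) : discNorm R B ≤ discNorm R (P * A + B) := by
  calc discNorm R B = discNorm R (P * A + B - P * A) := by rw [add_sub_cancel_left]
    _ ≤ discNorm R (P * A + B) := (discNorm_sub_le_max hR.le _ _).trans
      (max_le le_rfl (hP.discNorm_mul_le_discNorm_mul_add hR hB A))

end IsDistinguished

/-- A Weierstrass factorization `f = P * U` for the closed disc of radius `R`: the factor `P`
carries the roots in the disc, and `U` is a unit there, being at distance less than `1` from `1`
and normalized by `U(0) = 1`. -/
structure IsDiscFactorization {K : Type*} [NormedField K] (R : ℝ) (f P U : K[X]) : Prop where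
  mul_eq : P * U = f
  isDistinguished : IsDistinguished R P
  coeff_zero_eq_one : U.coeff 0 = 1
  discNorm_sub_one_lt : discNorm R (U - 1) < 1

namespace IsDiscFactorization

variable {K : Type*} [NormedField K] [IsUltrametricDist K] {R S : ℝ} {f f' P P' U U' : K[X]}

lemma discNorm_right (hR : 0 ≤ R) (h : IsDiscFactorization R f P U) : discNorm R U = 1 :=
  discNorm_eq_one hR h.coeff_zero_eq_one h.discNorm_sub_one_lt.le

/- With `U - U' = X * A` and `B = P - P'` one has `X * P * A + B = (f - f') - B * (U' - 1)`. If
`deg P' ≤ deg P`, then `X * P` is distinguished of degree greater than that of `B`, so `B` is no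
larger than the right-hand side, while `B * (U' - 1)` is smaller than `B`. -/
lemma discNorm_sub_le (hR : 0 < R) (h : IsDiscFactorization R f P U)
    (h' : IsDiscFactorization R f' P' U') :
    discNorm R (P - P') ≤ discNorm R (f - f') := by
  wlog hdeg : P'.natDegree ≤ P.natDegree generalizing f f' P P' U U'
  · rw [discNorm_sub_comm hR.le, discNorm_sub_comm hR.le f]
    exact this h' h (not_le.1 hdeg).le
  rcases eq_or_ne P 0 with rfl | hP0
  · have hf : f = 0 := by rw [← h.mul_eq, zero_mul]
    have hP' : P' = C (P'.coeff 0) := eq_C_of_natDegree_le_zero (by simpa using hdeg)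
    have hf' : f'.coeff 0 = P'.coeff 0 := by
      rw [← h'.mul_eq, mul_coeff_zero, h'.coeff_zero_eq_one, mul_one]
    rw [discNorm_sub_comm hR.le, discNorm_sub_comm hR.le f, hf, sub_zero, sub_zero, hP',
      discNorm_C, ← hf']
    simpa using norm_coeff_mul_pow_le_discNorm hR.le f' 0
  obtain ⟨A, hA⟩ : X ∣ U - U' := by
    rw [X_dvd_iff, coeff_sub, h.coeff_zero_eq_one, h'.coeff_zero_eq_one, sub_self]
  have hdivision : X * P * A + (P - P') = f - f' - (P - P') * (U' - 1) := by
    rw [← h.mul_eq, ← h'.mul_eq]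
    linear_combination -P * hA
  have hle : discNorm R (P - P') ≤ discNorm R (X * P * A + (P - P')) := by
    have hdegB : (P - P').natDegree < (X * P).natDegree := by
      rw [natDegree_X_mul hP0]
      exact Nat.lt_succ_of_le ((natDegree_sub_le P P').trans (max_le le_rfl hdeg))
    exact (h.isDistinguished.X_mul hR).discNorm_le_discNorm_mul_add hR hdegB A
  by_contra! hlt
  have hpos : 0 < discNorm R (P - P') := (discNorm_nonneg hR.le _).trans_lt hlt
  have hsmall : discNorm R ((P - P') * (U' - 1)) < discNorm R (P - P') := by
    rw [discNorm_mul hR]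
    exact mul_lt_of_lt_one_right hpos h'.discNorm_sub_one_lt
  refine hle.not_gt ?_
  rw [hdivision]
  exact (discNorm_sub_le_max hR.le _ _).trans_lt (max_lt hlt hsmall)

lemma norm_aeval_le {L : Type*} [NormedField L] [IsUltrametricDist L] [NormedAlgebra K L]
    (hR : 0 < R) (h : IsDiscFactorization R f P U) {x : L} (hx : ‖x‖ ≤ R) :
    ‖aeval x f‖ ≤ ‖aeval x P‖ := by
  rw [← h.mul_eq, map_mul, norm_mul]
  exact mul_le_of_le_one_right (norm_nonneg _)
    ((norm_aeval_le_discNorm hx U).trans_eq (h.discNorm_right hR.le))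

lemma discNorm_sub_le_div_mul (hS : 0 < S) (hSR : S ≤ R) (h : IsDiscFactorization R f P U) :
    discNorm S (f - P) ≤ S / R * discNorm S f := by
  have hR : 0 < R := hS.trans_le hSR
  have hU : discNorm S (U - 1) ≤ S / R := by
    refine (discNorm_le_div_mul_discNorm hS.le hSR hR (by simp [h.coeff_zero_eq_one])).trans ?_
    exact mul_le_of_le_one_right (by positivity) h.discNorm_sub_one_lt.le
  have hUS : discNorm S U = 1 :=
    discNorm_eq_one hS.le h.coeff_zero_eq_one (hU.trans ((div_le_one hR).2 hSR))
  calc discNorm S (f - P) = discNorm S f * discNorm S (U - 1) := by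
        rw [← h.mul_eq, discNorm_mul hS, hUS, mul_one, ← discNorm_mul hS, mul_sub, mul_one]
    _ ≤ S / R * discNorm S f := by
        rw [mul_comm]
        gcongr
        exact discNorm_nonneg hS.le f

end IsDiscFactorization

section AlgebraicFactorization

variable {E L : Type*} [Field E] [Field L] [Algebra E L]

lemma exists_mul_eq_forall_root {p : L → Prop} (hp : ∀ α β, IsConjRoot E α β → p α → p β)
    {f : E[X]} (hf : f ≠ 0) :
    ∃ P U : E[X], P * U = f ∧ (∀ α, aeval α P = 0 → p α) ∧ ∀ α, aeval α U = 0 → ¬p α := by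
  induction f using UniqueFactorizationMonoid.induction_on_prime with
  | h₁ => exact absurd rfl hf
  | h₂ u hu =>
    obtain ⟨a, ha, rfl⟩ := isUnit_iff.1 hu
    refine ⟨C a, 1, mul_one _, fun α hα => ?_, fun α hα => ?_⟩
    · simp [ha.ne_zero] at hα
    · simp at hα
  | h₃ g q hg hq ih =>
    obtain ⟨P, U, rfl, hP, hU⟩ := ih hg
    have hconj {α β : L} (hα : aeval α q = 0) (hβ : aeval β q = 0) : IsConjRoot E α β := by
      rw [isConjRoot_def, ← minpoly.eq_of_irreducible hq.irreducible hα,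
        minpoly.eq_of_irreducible hq.irreducible hβ]
    by_cases h : ∃ α, aeval α q = 0 ∧ p α
    · obtain ⟨α, hα, hpα⟩ := h
      refine ⟨q * P, U, mul_assoc _ _ _, fun β hβ => ?_, hU⟩
      rw [aeval_mul, mul_eq_zero] at hβ
      exact hβ.elim (fun hβ => hp α β (hconj hα hβ) hpα) (hP β)
    · push Not at h
      refine ⟨P, q * U, by ring, hP, fun β hβ => ?_⟩
      rw [aeval_mul, mul_eq_zero] at hβ
      exact hβ.elim (h β) (hU β)

lemma coeff_mem_of_roots_mem {M : Subfield L} {P : L[X]} (hP : P.Splits)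
    (hP0 : P.coeff 0 = 1) (hroots : ∀ r ∈ P.roots, r ∈ M) (i : ℕ) : P.coeff i ∈ M := by
  have hP_ne : P ≠ 0 := by rintro rfl; simp at hP0
  obtain ⟨Q, hQ⟩ : C P.leadingCoeff⁻¹ * P ∈ lifts M.subtype := by
    refine (hP.C_mul _).mem_lift_of_roots_mem_range ?_ _ fun r hr => ?_
    · simp [Monic, hP_ne]
    · rw [roots_C_mul _ (by simpa using hP_ne)] at hr
      exact ⟨⟨r, hroots r hr⟩, rfl⟩
  have hmem (j : ℕ) : P.leadingCoeff⁻¹ * P.coeff j ∈ M := by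
    rw [← coeff_C_mul, ← hQ]
    simp
  have hlead : P.leadingCoeff⁻¹ ∈ M := by simpa only [hP0, mul_one] using hmem 0
  have hlead_ne : P.leadingCoeff ≠ 0 := leadingCoeff_ne_zero.2 hP_ne
  simpa only [inv_inv, mul_inv_cancel_left₀ hlead_ne] using mul_mem (inv_mem hlead) (hmem i)

end AlgebraicFactorization

lemma norm_eq_of_isConjRoot {E K : Type*} [NontriviallyNormedField E] [CompleteSpace E]
    [IsUltrametricDist E] [NormedField K] [NormedAlgebra E K] [Algebra.IsAlgebraic E K] {α β : K}
    (h : IsConjRoot E α β) : ‖α‖ = ‖β‖ := by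
  rw [NormedAlgebra.norm_eq_spectralNorm E α, NormedAlgebra.norm_eq_spectralNorm E β, spectralNorm,
    spectralNorm, isConjRoot_def.1 h]

/- Conjugate roots have equal norms, so the factorization of `f` over `K` into the roots inside
and outside the disc is defined over `E`. -/
lemma exists_isDiscFactorization {E K : Type*} [NormedField E] [NormedField K]
    [IsUltrametricDist K] [IsAlgClosed K] [NormedAlgebra E K]
    (hconj : ∀ α β : K, IsConjRoot E α β → ‖α‖ = ‖β‖) {R : ℝ} (hR : 0 < R) {f : E[X]}
    (hf : f.coeff 0 = 1) :
    ∃ P U : E[X], P.coeff 0 = 1 ∧ IsDiscFactorization R f P U := by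
  obtain ⟨P, U, hPU, hP, hU⟩ := exists_mul_eq_forall_root (L := K) (p := fun α => ‖α‖ ≤ R)
    (fun α β h hα => hconj α β h ▸ hα) (f := f) (by rintro rfl; simp at hf)
  have hPU0 : P.coeff 0 * U.coeff 0 = 1 := by rw [← mul_coeff_zero, hPU, hf]
  have hU0 : U.coeff 0 ≠ 0 := right_ne_zero_of_mul_eq_one hPU0
  have haeval {Q : E[X]} {a : E} (ha : a ≠ 0) {r : K}
      (hr : r ∈ ((C a * Q).map (algebraMap E K)).roots) : aeval r Q = 0 := by
    simpa [IsRoot, ha] using (mem_roots'.1 hr).2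
  refine ⟨C (U.coeff 0) * P, C (U.coeff 0)⁻¹ * U, ?_, ?_, ?_, ?_, ?_⟩
  · rw [coeff_C_mul, mul_comm, hPU0]
  · rw [mul_mul_mul_comm, ← C_mul, mul_inv_cancel₀ hU0, C_1, one_mul, hPU]
  · rw [← IsDistinguished.map_algebraMap_iff (K := K) hR.le]
    exact .of_forall_norm_roots_le hR (IsAlgClosed.splits _) fun r hr => hP r (haeval hU0 hr)
  · rw [coeff_C_mul, inv_mul_cancel₀ hU0]
  · rw [← discNorm_map_algebraMap (K := K) hR.le, Polynomial.map_sub, Polynomial.map_one]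
    exact discNorm_sub_one_lt_one hR (IsAlgClosed.splits _) (by simp [hU0]) fun r hr =>
      not_le.1 (hU r (haeval (inv_ne_zero hU0) hr))

section Limits

variable {E : Type*} [NormedField E] {R : ℝ}

lemma tendsto_discNorm_trunc_sub (hR : 0 ≤ R) {f : E⟦X⟧} (hf : f.IsRestricted R) :
    Tendsto (fun x : ℕ × ℕ => discNorm R (f.trunc x.1 - f.trunc x.2)) atTop (𝓝 0) := by
  refine tendsto_order.2 ⟨fun a ha => .of_forall fun _ => ha.trans_le (discNorm_nonneg hR _),
    fun ε hε => ?_⟩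
  obtain ⟨n, hn⟩ := eventually_atTop.1
    (((PowerSeries.isRestricted_iff' R f).1 hf).eventually_lt_const hε)
  filter_upwards [eventually_ge_atTop (n, n)] with ⟨N, M⟩ ⟨hN, hM⟩
  obtain ⟨i, hi⟩ := exists_discNorm_eq R (f.trunc N - f.trunc M)
  dsimp only at hN hM ⊢
  rw [hi, coeff_sub, PowerSeries.coeff_trunc, PowerSeries.coeff_trunc]
  rcases lt_or_ge i n with hin | hin
  · simpa [hin.trans_le hN, hin.trans_le hM] using hε
  · have := hn i hin
    split_ifs <;> simpa

lemma tendsto_coeff_of_tendsto_discNorm_sub (hR : 0 < R) {P : ℕ → E[X]} {Q : E[X]}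
    (hP : Tendsto (fun N => discNorm R (P N - Q)) atTop (𝓝 0)) (i : ℕ) :
    Tendsto (fun N => (P N).coeff i) atTop (𝓝 (Q.coeff i)) := by
  refine tendsto_iff_norm_sub_tendsto_zero.2 (squeeze_zero (fun _ => norm_nonneg _) (fun N => ?_)
    (by simpa only [zero_div] using hP.div_const (R ^ i)))
  rw [le_div_iff₀ (pow_pos hR i), ← coeff_sub]
  exact norm_coeff_mul_pow_le_discNorm hR.le _ i

lemma exists_tendsto_discNorm_sub [CompleteSpace E] (hR : 0 < R) {P : ℕ → E[X]} {d : ℕ}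
    (hdeg : ∀ᶠ N in atTop, (P N).natDegree ≤ d)
    (hP : Tendsto (fun x : ℕ × ℕ => discNorm R (P x.1 - P x.2)) atTop (𝓝 0)) :
    ∃ Q : E[X], Q.natDegree ≤ d ∧ Tendsto (fun N => discNorm R (P N - Q)) atTop (𝓝 0) := by
  have hcoeff (i : ℕ) : ∃ a, Tendsto (fun N => (P N).coeff i) atTop (𝓝 a) := by
    refine cauchySeq_tendsto_of_complete (cauchySeq_iff_tendsto_dist_atTop_0.2 ?_)
    refine squeeze_zero (fun _ => dist_nonneg) (fun x => ?_)
      (by simpa only [zero_div] using hP.div_const (R ^ i))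
    rw [le_div_iff₀ (pow_pos hR i), dist_eq_norm, ← coeff_sub]
    exact norm_coeff_mul_pow_le_discNorm hR.le _ i
  choose q hq using hcoeff
  have hq0 (i : ℕ) (hi : d < i) : q i = 0 := by
    refine tendsto_nhds_unique (hq i) (tendsto_const_nhds.congr' ?_)
    filter_upwards [hdeg] with N hN
    exact (coeff_eq_zero_of_natDegree_lt (hN.trans_lt hi)).symm
  obtain ⟨Q, hQ⟩ : ∃ Q : E[X], ∀ i, Q.coeff i = q i := by
    refine ⟨(PowerSeries.mk q).trunc (d + 1), fun i => ?_⟩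
    rw [PowerSeries.coeff_trunc, PowerSeries.coeff_mk, ite_eq_left_iff, not_lt]
    exact fun hi => (hq0 i hi).symm
  refine ⟨Q, natDegree_le_iff_coeff_eq_zero.2 fun i hi => (hQ i).trans (hq0 i hi), ?_⟩
  refine tendsto_order.2 ⟨fun a ha => .of_forall fun _ => ha.trans_le (discNorm_nonneg hR.le _),
    fun ε hε => ?_⟩
  have hcauchy := hP.eventually_lt_const (half_pos hε)
  rw [← prod_atTop_atTop_eq] at hcauchy
  filter_upwards [hcauchy.curry] with N hN
  refine lt_of_le_of_lt ((discNorm_le_iff hR.le).2 fun i => ?_) (half_lt_self hε)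
  rw [coeff_sub, hQ]
  refine le_of_tendsto ((tendsto_const_nhds.sub (hq i)).norm.mul_const _) ?_
  filter_upwards [hN] with M hM
  rw [← coeff_sub]
  exact (norm_coeff_mul_pow_le_discNorm hR.le _ i).trans hM.le

lemma exists_isDistinguished_tendsto_discNorm_sub [CompleteSpace E] [IsUltrametricDist E]
    (hR : 0 < R) {P : ℕ → E[X]} (hdist : ∀ N, IsDistinguished R (P N))
    (hP0 : ∀ N, (P N).coeff 0 = 1)
    (hP : Tendsto (fun x : ℕ × ℕ => discNorm R (P x.1 - P x.2)) atTop (𝓝 0)) :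
    ∃ Q : E[X], IsDistinguished R Q ∧ Q.coeff 0 = 1 ∧
      Tendsto (fun N => discNorm R (P N - Q)) atTop (𝓝 0) := by
  obtain ⟨n, hn⟩ : ∃ n, ∀ N ≥ n, ∀ M ≥ n, discNorm R (P N - P M) < 1 := by
    obtain ⟨⟨n₁, n₂⟩, hn⟩ := eventually_atTop.1 (hP.eventually_lt_const one_pos)
    exact ⟨max n₁ n₂, fun N hN M hM => hn (N, M) ⟨(max_le_iff.1 hN).1, (max_le_iff.1 hM).2⟩⟩
  have hdeg {N M : ℕ} (hN : n ≤ N) (hM : n ≤ M) : (P N).natDegree ≤ (P M).natDegree :=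
    (hdist N).natDegree_le_of_discNorm_sub_lt hR.le
      ((hn N hN M hM).trans_le (one_le_discNorm hR.le (hP0 N)))
  obtain ⟨Q, hQdeg, hQ⟩ := exists_tendsto_discNorm_sub hR
    ((eventually_ge_atTop n).mono fun N hN => hdeg hN le_rfl) hP
  refine ⟨Q, ?_, ?_, hQ⟩
  · obtain ⟨N, hN, hnN⟩ := ((hQ.eventually_lt_const one_pos).and (eventually_ge_atTop n)).exists
    exact (hdist N).of_discNorm_sub_lt hR.le (hN.trans_le (one_le_discNorm hR.le (hP0 N)))
      (hQdeg.trans (hdeg le_rfl hnN))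
  · have hcoeff := tendsto_coeff_of_tendsto_discNorm_sub hR hQ 0
    simp only [hP0] at hcoeff
    exact tendsto_nhds_unique hcoeff tendsto_const_nhds

end Limits

section Weierstrass

variable {E : Type*} [NontriviallyNormedField E] [CompleteSpace E] [IsUltrametricDist E]
  (K : Type*) [NormedField K] [IsUltrametricDist K] [IsAlgClosed K] [NormedAlgebra E K]
  [Algebra.IsAlgebraic E K] {R : ℝ} {f : E⟦X⟧}

include K in
lemma exists_tendsto_isDiscFactorization (hR : 0 < R) (hf : f.IsRestricted R)
    (hf0 : f.constantCoeff = 1) :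
    ∃ (P : E[X]) (p u : ℕ → E[X]), IsDistinguished R P ∧ P.coeff 0 = 1 ∧
      (∀ N, IsDiscFactorization R (f.trunc (N + 1)) (p N) (u N)) ∧
      Tendsto (fun N => discNorm R (p N - P)) atTop (𝓝 0) := by
  have hfac (N : ℕ) : ∃ P U, P.coeff 0 = 1 ∧ IsDiscFactorization R (f.trunc (N + 1)) P U :=
    exists_isDiscFactorization (K := K) (fun _ _ => norm_eq_of_isConjRoot) hR
      (by simpa [PowerSeries.coeff_trunc] using hf0)
  choose p u hp0 hfac using hfac
  have hsucc : Tendsto (fun x : ℕ × ℕ => (x.1 + 1, x.2 + 1)) atTop atTop :=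
    tendsto_atTop_mono (fun x => ⟨x.1.le_succ, x.2.le_succ⟩) tendsto_id
  have htrunc : Tendsto (fun x : ℕ × ℕ => discNorm R (f.trunc (x.1 + 1) - f.trunc (x.2 + 1)))
      atTop (𝓝 0) := by
    simpa only [Function.comp_def] using (tendsto_discNorm_trunc_sub hR.le hf).comp hsucc
  obtain ⟨P, hP, hP0, hlim⟩ := exists_isDistinguished_tendsto_discNorm_sub hR
    (fun N => (hfac N).isDistinguished) hp0
    (squeeze_zero (fun _ => discNorm_nonneg hR.le _)
      (fun x => (hfac x.1).discNorm_sub_le hR (hfac x.2)) htrunc)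
  exact ⟨P, p, u, hP, hP0, hfac, hlim⟩

lemma exists_tendsto_aeval_trunc_and_norm_coeff_sub_le (hR : 0 < R) (hf : f.IsRestricted R)
    (hf0 : f.constantCoeff = 1) :
    ∃ P : E[X], P.coeff 0 = 1 ∧
      (∀ α : K, aeval α P = 0 → Tendsto (fun N => aeval α (f.trunc N)) atTop (𝓝 0)) ∧
      ∀ S B : ℝ, 0 < S → S ≤ R → (∀ n, ‖f.coeff n‖ * S ^ n ≤ B) →
        ∀ n, ‖f.coeff n - P.coeff n‖ * S ^ n ≤ S / R * B := by
  obtain ⟨P, p, u, hP, hP0, hfac, hlim⟩ := exists_tendsto_isDiscFactorization K hR hf hf0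
  refine ⟨P, hP0, fun α hα => ?_, fun S B hS hSR hB n => ?_⟩
  · have hαR : ‖α‖ ≤ R := by
      refine ((IsDistinguished.map_algebraMap_iff (K := K) hR.le).2 hP).norm_le_of_isRoot hR ?_ ?_
      · rw [Polynomial.map_ne_zero_iff (algebraMap E K).injective]
        rintro rfl
        simp at hP0
      · rwa [IsRoot, eval_map_algebraMap]
    refine (tendsto_add_atTop_iff_nat 1).1 (squeeze_zero_norm (fun N => ?_) hlim)
    calc ‖aeval α (f.trunc (N + 1))‖ ≤ ‖aeval α (p N)‖ := (hfac N).norm_aeval_le hR hαR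
      _ = ‖aeval α (p N - P)‖ := by rw [map_sub, hα, sub_zero]
      _ ≤ discNorm R (p N - P) := norm_aeval_le_discNorm hαR _
  · have hcoeff := tendsto_coeff_of_tendsto_discNorm_sub hR hlim n
    refine le_of_tendsto ((tendsto_const_nhds.sub hcoeff).norm.mul_const _) ?_
    filter_upwards [eventually_ge_atTop n] with N hN
    have htrunc : discNorm S (f.trunc (N + 1)) ≤ B := (discNorm_le_iff hS.le).2 fun i => by
      rw [PowerSeries.coeff_trunc]
      split_ifs
      · exact hB i
      · rw [norm_zero, zero_mul]
        exact (by positivity : (0 : ℝ) ≤ ‖f.coeff 0‖ * S ^ 0).trans (hB 0)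
    calc ‖f.coeff n - (p N).coeff n‖ * S ^ n
        = ‖(f.trunc (N + 1) - p N).coeff n‖ * S ^ n := by
          rw [coeff_sub, PowerSeries.coeff_trunc, if_pos (Nat.lt_succ_of_le hN)]
      _ ≤ discNorm S (f.trunc (N + 1) - p N) := norm_coeff_mul_pow_le_discNorm hS.le _ n
      _ ≤ S / R * discNorm S (f.trunc (N + 1)) := (hfac N).discNorm_sub_le_div_mul hS hSR
      _ ≤ S / R * B := by gcongr

variable {K} in
lemma coeff_mem_closure_of_zeros_mem (hf : ∀ R, 0 < R → f.IsRestricted R)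
    (hf0 : f.constantCoeff = 1) {M : Subfield K}
    (hM : ∀ α : K, Tendsto (fun N => aeval α (f.trunc N)) atTop (𝓝 0) → α ∈ M) (n : ℕ) :
    f.coeff n ∈ closure (algebraMap E K ⁻¹' M) := by
  obtain ⟨B, hB⟩ := ((PowerSeries.isRestricted_iff' 1 f).1 (hf 1 one_pos)).bddAbove_range
  choose P hP0 hPM hPf using fun k : ℕ =>
    exists_tendsto_aeval_trunc_and_norm_coeff_sub_le K k.cast_add_one_pos
      (hf _ k.cast_add_one_pos) hf0
  have hlim : Tendsto (fun k => (P k).coeff n) atTop (𝓝 (f.coeff n)) := by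
    refine tendsto_iff_norm_sub_tendsto_zero.2 (squeeze_zero (fun _ => norm_nonneg _) (fun k => ?_)
      (by simpa using tendsto_one_div_add_atTop_nhds_zero_nat.mul_const B))
    rw [norm_sub_rev]
    simpa using hPf k 1 B one_pos (by simp) (fun i => hB ⟨i, rfl⟩) n
  refine mem_closure_of_tendsto hlim (.of_forall fun k => ?_)
  have hmem := coeff_mem_of_roots_mem (IsAlgClosed.splits ((P k).map (algebraMap E K)))
    (by simp [hP0]) (fun r hr => hM r (hPM k r (by simpa [IsRoot] using (mem_roots'.1 hr).2))) n
  rwa [coeff_map] at hmem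

end Weierstrass

lemma algebraMap_coeff_mem_of_zeros_mem {F E K : Type*} [NontriviallyNormedField F]
    [CompleteSpace F] [NontriviallyNormedField E] [IsUltrametricDist E] [NormedAlgebra F E]
    [FiniteDimensional F E] [NormedField K] [IsUltrametricDist K] [IsAlgClosed K]
    [NormedAlgebra E K] [Algebra.IsAlgebraic E K] [Algebra F K] [IsScalarTower F E K] {f : E⟦X⟧}
    (hf : ∀ R, 0 < R → f.IsRestricted R) (hf0 : f.constantCoeff = 1) {M : IntermediateField F K}
    (hM : ∀ α : K, Tendsto (fun N => aeval α (f.trunc N)) atTop (𝓝 0) → α ∈ M) (n : ℕ) :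
    algebraMap E K (f.coeff n) ∈ M := by
  have : CompleteSpace E := FiniteDimensional.complete F E
  have hclosed : IsClosed (algebraMap E K ⁻¹' M) :=
    Submodule.closed_of_finiteDimensional
      ((Subalgebra.toSubmodule M.toSubalgebra).comap (IsScalarTower.toAlgHom F E K).toLinearMap)
  exact hclosed.closure_subset (coeff_mem_closure_of_zeros_mem (M := M.toSubfield) hf hf0 hM n)

/-- For an entire power series `f(x) = 1 + ∑_{n≥1} cₙ xⁿ` with coefficients in a
finite extension `F₁` of a complete nontrivially valued nonarchimedean field `F`, the field
generated over `F` by the coefficients of `f` is contained in the field generated by the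
zeroes of `f` (inside an algebraic closure `Ω` of `F` carrying the spectral norm). -/
theorem stmt_2 (F : Type*) [NontriviallyNormedField F] [CompleteSpace F] [IsUltrametricDist F]
    (Ω : Type*) [NormedField Ω] [IsUltrametricDist Ω] [Algebra F Ω] [IsAlgClosure F Ω]
    (hext : ∀ x : F, ‖algebraMap F Ω x‖ = ‖x‖)
    (F₁ : IntermediateField F Ω) [FiniteDimensional F F₁]
    (c : ℕ → Ω) (hc0 : c 0 = 1) (hcF₁ : ∀ n, c n ∈ F₁)
    (hentire : ∀ C : ℝ, 0 < C →
      Tendsto (fun n : ℕ => ‖c n‖ * C ^ n) atTop (nhds 0)) :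
    IntermediateField.adjoin F (Set.range c) ≤
      IntermediateField.adjoin F
        {α : Ω | Tendsto (fun N : ℕ => ∑ n ∈ Finset.range N, c n * α ^ n) atTop (nhds 0)} := by
  let _ : NormedAlgebra F Ω :=
    { norm_smul_le := fun r x => by rw [Algebra.smul_def, norm_mul, hext] }
  let _ : NormedAlgebra F₁ Ω := { norm_smul_le := fun x y => norm_mul_le (x : Ω) y }
  have : IsAlgClosed Ω := IsAlgClosure.isAlgClosed F
  have : Algebra.IsAlgebraic F Ω := IsAlgClosure.isAlgebraic
  obtain ⟨f, hf⟩ : ∃ f : F₁⟦X⟧, ∀ n, algebraMap F₁ Ω (f.coeff n) = c n :=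
    ⟨PowerSeries.mk fun n => ⟨c n, hcF₁ n⟩, fun n => by simp⟩
  have hf0 : f.constantCoeff = 1 := by
    apply (algebraMap F₁ Ω).injective
    rw [← PowerSeries.coeff_zero_eq_constantCoeff_apply, hf, hc0, map_one]
  have hrestricted (R : ℝ) (hR : 0 < R) : f.IsRestricted R := by
    simpa only [PowerSeries.isRestricted_iff', ← hf, norm_algebraMap'] using hentire R hR
  refine IntermediateField.adjoin_le_iff.2 (Set.range_subset_iff.2 fun n => hf n ▸ ?_)
  refine algebraMap_coeff_mem_of_zeros_mem hrestricted hf0 (fun α hα => ?_) n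
  refine IntermediateField.subset_adjoin F _ ?_
  simpa only [Set.mem_ofPred_eq, aeval_def, PowerSeries.eval₂_trunc_eq_sum_range, hf] using hα
end

section
/- Let r = p^m with p prime, let K = 𝔽_r((X)) be the field of formal Laurent series over 𝔽_r with its X-adic absolute value, and set T := X⁻¹ ∈ K. Let C_∞ be the completion, with respect to the spectral norm, of a fixed algebraic closure of K, and let ι : K → C_∞ be the canonical embedding. Let t ≥ 1 and let N be a nilpotent t×t matrix with entries in C_∞. Then there exists exactly one continuous 𝔽_r-algebra homomorphism φ : K → M_t(C_∞) (matrices topologized by entrywise convergence) with φ(T) = ι(T)·1 + N. Moreover, for every x ∈ K one has φ(x) = ι(x)·1 + N_x, where N_x is nilpotent and is a polynomial in N with coefficients in ι(K). -/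
set_option synthInstance.maxHeartbeats 1000000
set_option maxHeartbeats 1000000

/-- The element `T := X⁻¹` of `K = 𝔽_r((X))`, a uniformizer at the infinite place of
`𝔽_r(T)`. -/
noncomputable def laurentT (Fr : Type*) [Field Fr] : LaurentSeries Fr :=
  (HahnSeries.single (1 : ℤ) (1 : Fr))⁻¹

/-! The homomorphism is Taylor expansion at `T`, evaluated at the nilpotent increment `N`: expanding
`(T + Y) ^ n = ∑ k, n.choose k • T ^ (n - k) * Y ^ k` for all `n : ℤ` gives a ring homomorphism
`x ↦ x(T + Y)` from `F((T⁻¹))` to `F((T⁻¹))⟦Y⟧`, whose multiplicativity is the Chu–Vandermonde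
identity, and a nilpotent `N` may be substituted for `Y` without any convergence question. The
constant coefficient of `x(T + Y)` is `x`, so `x(T + N) - x` is a multiple of `N`. Uniqueness holds
because a homomorphism is determined on `F(T)` by the image of `T`, and `F(T)` is dense. -/

section CoeffScale

variable {Γ R : Type*} [PartialOrder Γ] [CommSemiring R]

/-- The Hadamard product of a Hahn series with a family of scalars `c`, that is, the map
`∑ x_n X ^ n ↦ ∑ c_n x_n X ^ n`. -/
def coeffScale (c : Γ → R) : HahnSeries Γ R →ₗ[R] HahnSeries Γ R where
  toFun x :=
    { coeff := fun n => c n * x.coeff n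
      isPWO_support' := x.isPWO_support.mono (Function.support_mul_subset_right c x.coeff) }
  map_add' x y := by ext n; exact mul_add _ _ _
  map_smul' a x := by ext n; exact mul_left_comm _ _ _

theorem coeff_coeffScale (c : Γ → R) (x : HahnSeries Γ R) (n : Γ) :
    (coeffScale c x).coeff n = c n * x.coeff n := rfl

theorem support_coeffScale_subset (c : Γ → R) (x : HahnSeries Γ R) :
    (coeffScale c x).support ⊆ x.support :=
  Function.support_mul_subset_right c x.coeff

theorem coeffScale_single (c : Γ → R) (n : Γ) (a : R) :
    coeffScale c (HahnSeries.single n a) = HahnSeries.single n (c n * a) := by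
  classical
  ext m
  by_cases h : m = n <;> simp [coeff_coeffScale, h]

theorem coeffScale_mul [AddCommMonoid Γ] [IsOrderedCancelAddMonoid Γ] {ι : Type*} (s : Finset ι)
    {c : Γ → R} {f g : ι → Γ → R} (hc : ∀ a b, c (a + b) = ∑ i ∈ s, f i a * g i b)
    (x y : HahnSeries Γ R) :
    coeffScale c (x * y) = ∑ i ∈ s, coeffScale (f i) x * coeffScale (g i) y := by
  ext n
  have hcoeff (i : ι) : (coeffScale (f i) x * coeffScale (g i) y).coeff n =
      ∑ ab ∈ Finset.antidiagonal x.isPWO_support y.isPWO_support n,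
        f i ab.1 * g i ab.2 * (x.coeff ab.1 * y.coeff ab.2) := by
    rw [HahnSeries.coeff_mul]
    have hsub : Finset.antidiagonal (coeffScale (f i) x).isPWO_support
        (coeffScale (g i) y).isPWO_support n ⊆
          Finset.antidiagonal x.isPWO_support y.isPWO_support n :=
      (Finset.antidiagonal_mono_left (support_coeffScale_subset _ _)).trans
        (Finset.antidiagonal_mono_right (support_coeffScale_subset _ _))
    refine (Finset.sum_subset hsub fun ab hab hnot => ?_).trans
      (Finset.sum_congr rfl fun ab _ => mul_mul_mul_comm _ _ _ _)
    by_contra h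
    exact hnot (Finset.mem_antidiagonal.2
      ⟨left_ne_zero_of_mul h, right_ne_zero_of_mul h, (Finset.mem_antidiagonal.1 hab).2.2⟩)
  rw [coeff_coeffScale, HahnSeries.coeff_mul, Finset.mul_sum, HahnSeries.coeff_sum]
  simp only [hcoeff]
  rw [Finset.sum_comm]
  refine Finset.sum_congr rfl fun ab hab => ?_
  rw [← (Finset.mem_antidiagonal.1 hab).2.2, hc, Finset.sum_mul]

end CoeffScale

section NilpotentAeval

variable {A B : Type*} [CommSemiring A] [Semiring B] [Algebra A B] {b : B}

theorem aeval_trunc (b : B) (n : ℕ) (f : PowerSeries A) :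
    Polynomial.aeval b (PowerSeries.trunc n f) =
      ∑ k ∈ Finset.range n, algebraMap A B (PowerSeries.coeff k f) * b ^ k :=
  PowerSeries.eval₂_trunc_eq_sum_range b (algebraMap A B) n f

theorem aeval_trunc_coe {n : ℕ} (hb : b ^ n = 0) (p : Polynomial A) :
    Polynomial.aeval b (PowerSeries.trunc n (p : PowerSeries A)) = Polynomial.aeval b p := by
  obtain ⟨m, hn, hp⟩ : ∃ m, n ≤ m ∧ p.natDegree < m :=
    ⟨max n (p.natDegree + 1), le_max_left _ _, by simp⟩
  rw [aeval_trunc, Polynomial.aeval_eq_sum_range' hp]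
  simp only [Polynomial.coeff_coe, ← Algebra.smul_def]
  refine Finset.sum_subset (Finset.range_mono hn) fun k _ hk => ?_
  rw [pow_eq_zero_of_le (by simpa using hk) hb, smul_zero]

/-- Evaluation of a power series at a nilpotent element `b`, by means of its truncation at the
nilpotency class of `b`. -/
noncomputable def nilpotentAeval (hb : IsNilpotent b) : PowerSeries A →ₐ[A] B :=
  have aeval_trunc_nilpotencyClass (p : Polynomial A) :
      Polynomial.aeval b (PowerSeries.trunc (nilpotencyClass b) (p : PowerSeries A)) =
        Polynomial.aeval b p :=
    aeval_trunc_coe (pow_nilpotencyClass hb) p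
  { toFun := fun f => Polynomial.aeval b (PowerSeries.trunc (nilpotencyClass b) f)
    map_zero' := by simp
    map_add' := fun f g => by simp
    map_one' := by
      rw [← Polynomial.coe_one, aeval_trunc_nilpotencyClass, map_one]
    map_mul' := fun f g => by
      rw [← PowerSeries.trunc_trunc_mul_trunc, ← Polynomial.coe_mul, aeval_trunc_nilpotencyClass,
        map_mul]
    commutes' := fun a => by
      rw [PowerSeries.algebraMap_apply, Algebra.algebraMap_self_apply, ← Polynomial.coe_C,
        aeval_trunc_nilpotencyClass, Polynomial.aeval_C] }

theorem nilpotentAeval_apply (hb : IsNilpotent b) (f : PowerSeries A) :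
    nilpotentAeval hb f = Polynomial.aeval b (PowerSeries.trunc (nilpotencyClass b) f) := rfl

theorem nilpotentAeval_X (hb : IsNilpotent b) :
    nilpotentAeval hb (PowerSeries.X : PowerSeries A) = b := by
  rw [nilpotentAeval_apply, ← Polynomial.coe_X, aeval_trunc_coe (pow_nilpotencyClass hb),
    Polynomial.aeval_X]

theorem isNilpotent_nilpotentAeval (hb : IsNilpotent b) {f : PowerSeries A}
    (hf : PowerSeries.constantCoeff f = 0) : IsNilpotent (nilpotentAeval hb f) := by
  obtain ⟨g, rfl⟩ := PowerSeries.X_dvd_iff.2 hf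
  have hcomm : Commute b (nilpotentAeval hb g) := by
    simpa only [nilpotentAeval_X] using
      (Commute.all (PowerSeries.X : PowerSeries A) g).map (nilpotentAeval hb)
  rw [map_mul, nilpotentAeval_X]
  exact hcomm.isNilpotent_mul_right hb

end NilpotentAeval

section LaurentTaylor

open Finset

variable (R : Type*) [CommRing R]

/-- The `k`-th coefficient of the Taylor expansion `x(T + Y)` of a Laurent series `x` in `X = T⁻¹`.
Since `(T + Y) ^ n = ∑ k, n.choose k • T ^ (n - k) * Y ^ k`, it is obtained from `x` by multiplying
the coefficient of `X ^ n = T ^ (-n)` by `(-n).choose k` and the resulting series by `X ^ k`. -/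
noncomputable def laurentTaylorCoeff (k : ℕ) (x : LaurentSeries R) : LaurentSeries R :=
  HahnSeries.single (k : ℤ) 1 * coeffScale (fun n : ℤ => ((Ring.choose (-n) k : ℤ) : R)) x

variable {R}

theorem laurentTaylorCoeff_single (k : ℕ) (n : ℤ) (a : R) :
    laurentTaylorCoeff R k (HahnSeries.single n a) =
      HahnSeries.single (k + n) ((Ring.choose (-n) k : ℤ) * a) := by
  rw [laurentTaylorCoeff, coeffScale_single, HahnSeries.single_mul_single, one_mul]

theorem laurentTaylorCoeff_mul (k : ℕ) (x y : LaurentSeries R) :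
    laurentTaylorCoeff R k (x * y) =
      ∑ ij ∈ antidiagonal k, laurentTaylorCoeff R ij.1 x * laurentTaylorCoeff R ij.2 y := by
  have vandermonde (a b : ℤ) : ((Ring.choose (-(a + b)) k : ℤ) : R) = ∑ ij ∈ antidiagonal k,
      ((Ring.choose (-a) ij.1 : ℤ) : R) * ((Ring.choose (-b) ij.2 : ℤ) : R) := by
    rw [neg_add, Ring.add_choose_eq k (Commute.all _ _)]
    push_cast
    rfl
  rw [laurentTaylorCoeff, coeffScale_mul _ vandermonde, mul_sum]
  refine sum_congr rfl fun ij hij => ?_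
  rw [laurentTaylorCoeff, laurentTaylorCoeff, mul_mul_mul_comm, HahnSeries.single_mul_single,
    one_mul, ← Nat.cast_add, mem_antidiagonal.1 hij]

theorem laurentTaylorCoeff_C (k : ℕ) (a : R) :
    laurentTaylorCoeff R k (HahnSeries.C a) = if k = 0 then HahnSeries.C a else 0 := by
  rw [HahnSeries.C_apply, laurentTaylorCoeff_single, neg_zero, Ring.choose_zero_ite]
  split_ifs with hk <;> simp [hk]

variable (R) in
/-- The Taylor expansion `x ↦ x(T + Y)` of Laurent series in `T⁻¹`. -/
noncomputable def laurentTaylor : LaurentSeries R →+* PowerSeries (LaurentSeries R) where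
  toFun x := PowerSeries.mk fun k => laurentTaylorCoeff R k x
  map_zero' := by ext1 k; simp [laurentTaylorCoeff]
  map_add' x y := by ext1 k; simp [laurentTaylorCoeff, mul_add]
  map_one' := by
    ext1 k
    rw [PowerSeries.coeff_mk, PowerSeries.coeff_one, ← map_one HahnSeries.C, laurentTaylorCoeff_C]
  map_mul' x y := by
    ext1 k
    simp only [PowerSeries.coeff_mul, PowerSeries.coeff_mk, laurentTaylorCoeff_mul]

theorem coeff_laurentTaylor (k : ℕ) (x : LaurentSeries R) :
    PowerSeries.coeff k (laurentTaylor R x) = laurentTaylorCoeff R k x :=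
  PowerSeries.coeff_mk k fun k => laurentTaylorCoeff R k x

theorem laurentTaylor_C (a : R) :
    laurentTaylor R (HahnSeries.C a) = PowerSeries.C (HahnSeries.C a) := by
  ext1 k
  rw [coeff_laurentTaylor, laurentTaylorCoeff_C, PowerSeries.coeff_C]

theorem constantCoeff_laurentTaylor (x : LaurentSeries R) :
    PowerSeries.constantCoeff (laurentTaylor R x) = x := by
  rw [← PowerSeries.coeff_zero_eq_constantCoeff_apply, coeff_laurentTaylor]
  ext n
  simp [laurentTaylorCoeff, coeff_coeffScale]

end LaurentTaylor

section Field

variable {F : Type*} [Field F]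

theorem laurentT_eq_single : laurentT F = HahnSeries.single (-1) 1 := by
  rw [laurentT, HahnSeries.inv_single, inv_one]

theorem laurentTaylor_laurentT :
    laurentTaylor F (laurentT F) = PowerSeries.C (laurentT F) + PowerSeries.X := by
  ext1 k
  rw [coeff_laurentTaylor, laurentT_eq_single, laurentTaylorCoeff_single, neg_neg, ← Nat.cast_one,
    Ring.choose_natCast, map_add, PowerSeries.coeff_C, PowerSeries.coeff_X]
  match k with
  | 0 => simp
  | 1 => simp
  | k + 2 => simp [Nat.choose_eq_zero_of_lt]

theorem valuation_coeffScale_le (c : ℤ → F) (x : LaurentSeries F) :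
    Valued.v (coeffScale c x) ≤ Valued.v x := by
  rcases eq_or_ne x 0 with rfl | hx
  · rw [map_zero]
  · have hv : Valued.v x ≠ 0 := (Valuation.ne_zero_iff _).2 hx
    rw [LaurentSeries.valuation_le_iff_coeff_lt_log_eq_zero _ hv]
    intro n hn
    rw [coeff_coeffScale,
      (LaurentSeries.valuation_le_iff_coeff_lt_log_eq_zero _ hv).1 le_rfl n hn, mul_zero]

theorem continuous_coeffScale (c : ℤ → F) :
    Continuous (coeffScale c : LaurentSeries F → LaurentSeries F) := by
  refine continuous_of_continuousAt_zero (coeffScale c) ?_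
  rw [ContinuousAt, map_zero]
  refine ((Valued.hasBasis_nhds_zero _ _).tendsto_iff (Valued.hasBasis_nhds_zero _ _)).2
    fun γ _ => ⟨γ, trivial, fun x hx => ?_⟩
  exact (Valued.v.restrict_le_iff.2 (valuation_coeffScale_le c x)).trans_lt hx

theorem continuous_laurentTaylorCoeff (k : ℕ) : Continuous (laurentTaylorCoeff F k) :=
  continuous_const.mul (continuous_coeffScale _)

theorem ratFunc_ringHom_ext {B : Type*} [Semiring B] {f g : RatFunc F →+* B}
    (hC : ∀ a, f (RatFunc.C a) = g (RatFunc.C a)) (hX : f RatFunc.X = g RatFunc.X) : f = g := by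
  refine IsLocalization.ringHom_ext (nonZeroDivisors (Polynomial F)) (Polynomial.ringHom_ext ?_ ?_)
  · simpa only [RingHom.comp_apply, RatFunc.algebraMap_C] using hC
  · simpa only [RingHom.comp_apply, RatFunc.algebraMap_X] using hX

open scoped RatFunc in
theorem laurentSeries_algHom_ext {B : Type*} [Semiring B] [Algebra F B] [TopologicalSpace B]
    [T2Space B] {φ ψ : LaurentSeries F →ₐ[F] B} (hφ : Continuous φ) (hψ : Continuous ψ)
    (h : φ (laurentT F) = ψ (laurentT F)) : φ = ψ := by
  let ofRatFunc := algebraMap (RatFunc F) (LaurentSeries F)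
  have hRat : (φ : LaurentSeries F →+* B).comp ofRatFunc =
      (ψ : LaurentSeries F →+* B).comp ofRatFunc := by
    refine ratFunc_ringHom_ext (fun a => ?_) ?_
    · have hC : ofRatFunc (RatFunc.C a) = algebraMap F (LaurentSeries F) a := by
        rw [LaurentSeries.algebraMap_apply]
        simp [ofRatFunc, ← RatFunc.algebraMap_C,
          ← IsScalarTower.algebraMap_apply (Polynomial F) (RatFunc F)]
      simp only [RingHom.comp_apply, RingHom.coe_coe, hC, AlgHom.commutes]
    · have hX : ofRatFunc RatFunc.X = (laurentT F)⁻¹ := by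
        rw [laurentT, inv_inv]
        exact RatFunc.coe_X
      simpa only [RingHom.comp_apply, RingHom.coe_coe, hX] using eq_on_inv₀ φ ψ h
  exact DFunLike.coe_injective
    (LaurentSeries.coe_range_dense.equalizer hφ hψ (congrArg DFunLike.coe hRat))

end Field

section LaurentTranslate

theorem algebraMap_hahnSeries_C {Γ R B : Type*} [AddCommMonoid Γ] [PartialOrder Γ]
    [IsOrderedCancelAddMonoid Γ] [CommSemiring R] [Semiring B] [Algebra (HahnSeries Γ R) B]
    [Algebra R B] [IsScalarTower R (HahnSeries Γ R) B] (a : R) :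
    algebraMap (HahnSeries Γ R) B (HahnSeries.C a) = algebraMap R B a := by
  rw [HahnSeries.C_eq_algebraMap, ← IsScalarTower.algebraMap_apply]

section Semiring

variable {F B : Type*} [Field F] [Semiring B] [Algebra (LaurentSeries F) B] [Algebra F B]
  [IsScalarTower F (LaurentSeries F) B] {b : B}

/-- The algebra homomorphism `x ↦ x(T + b)` on Laurent series in `T⁻¹`, for a nilpotent `b`. -/
noncomputable def laurentTranslate (hb : IsNilpotent b) : LaurentSeries F →ₐ[F] B where
  toRingHom := (nilpotentAeval (A := LaurentSeries F) hb).toRingHom.comp (laurentTaylor F)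
  commutes' a := by
    change nilpotentAeval hb (laurentTaylor F (algebraMap F (LaurentSeries F) a)) = _
    rw [LaurentSeries.algebraMap_apply, laurentTaylor_C, ← algebraMap_hahnSeries_C (Γ := ℤ)]
    exact (nilpotentAeval hb).commutes (HahnSeries.C a)

theorem laurentTranslate_apply (hb : IsNilpotent b) (x : LaurentSeries F) :
    laurentTranslate hb x = nilpotentAeval hb (laurentTaylor F x) := rfl

theorem laurentTranslate_laurentT (hb : IsNilpotent b) :
    laurentTranslate hb (laurentT F) = algebraMap (LaurentSeries F) B (laurentT F) + b := by
  rw [laurentTranslate_apply, laurentTaylor_laurentT, map_add, nilpotentAeval_X]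
  exact congrArg (· + b) ((nilpotentAeval hb).commutes (laurentT F))

theorem continuous_laurentTranslate [TopologicalSpace B] [IsTopologicalSemiring B]
    (hι : Continuous (algebraMap (LaurentSeries F) B)) (hb : IsNilpotent b) :
    Continuous (laurentTranslate (F := F) hb) := by
  simp only [funext (laurentTranslate_apply hb), nilpotentAeval_apply, aeval_trunc,
    coeff_laurentTaylor]
  exact continuous_finsetSum _ fun k _ =>
    (hι.comp (continuous_laurentTaylorCoeff k)).mul continuous_const

end Semiring

section Ring

variable {F B : Type*} [Field F] [Ring B] [Algebra (LaurentSeries F) B] [Algebra F B]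
  [IsScalarTower F (LaurentSeries F) B] {b : B}

theorem laurentTranslate_sub_algebraMap (hb : IsNilpotent b) (x : LaurentSeries F) :
    laurentTranslate hb x - algebraMap (LaurentSeries F) B x =
      nilpotentAeval hb (laurentTaylor F x - PowerSeries.C x) := by
  rw [map_sub, laurentTranslate_apply]
  exact congrArg (_ - ·) ((nilpotentAeval hb).commutes x).symm

theorem isNilpotent_laurentTranslate_sub_algebraMap (hb : IsNilpotent b) (x : LaurentSeries F) :
    IsNilpotent (laurentTranslate hb x - algebraMap (LaurentSeries F) B x) := by
  rw [laurentTranslate_sub_algebraMap]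
  exact isNilpotent_nilpotentAeval hb (by simp [constantCoeff_laurentTaylor])

end Ring

end LaurentTranslate

theorem stmt_6_general {F B : Type*} [Field F] [Ring B] [TopologicalSpace B] [IsTopologicalRing B]
    [T2Space B] [Algebra (LaurentSeries F) B] [Algebra F B] [IsScalarTower F (LaurentSeries F) B]
    (hι : Continuous (algebraMap (LaurentSeries F) B)) {b : B} (hb : IsNilpotent b) :
    (∃! φ : LaurentSeries F →ₐ[F] B,
        Continuous φ ∧ φ (laurentT F) = algebraMap (LaurentSeries F) B (laurentT F) + b) ∧
    ∀ φ : LaurentSeries F →ₐ[F] B,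
      (Continuous φ ∧ φ (laurentT F) = algebraMap (LaurentSeries F) B (laurentT F) + b) →
      ∀ x : LaurentSeries F,
        IsNilpotent (φ x - algebraMap (LaurentSeries F) B x) ∧
        ∃ q : Polynomial (LaurentSeries F),
          φ x - algebraMap (LaurentSeries F) B x = Polynomial.aeval b q := by
  have hcont := continuous_laurentTranslate hι hb
  have hT := laurentTranslate_laurentT (F := F) hb
  have huniq (φ : LaurentSeries F →ₐ[F] B) (hφ : Continuous φ ∧
      φ (laurentT F) = algebraMap (LaurentSeries F) B (laurentT F) + b) :
      φ = laurentTranslate hb :=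
    laurentSeries_algHom_ext hφ.1 hcont (hφ.2.trans hT.symm)
  refine ⟨⟨_, ⟨hcont, hT⟩, huniq⟩, fun φ hφ x => ?_⟩
  rw [huniq φ hφ]
  exact ⟨isNilpotent_laurentTranslate_sub_algebraMap hb x, _, laurentTranslate_sub_algebraMap hb x⟩

theorem continuous_algebraMap_matrix {A C n : Type*} [CommSemiring A] [Semiring C] [Algebra A C]
    [TopologicalSpace A] [TopologicalSpace C] [Fintype n] [DecidableEq n]
    (hι : Continuous (algebraMap A C)) : Continuous (algebraMap A (Matrix n n C)) :=
  (continuous_pi fun _ => hι).matrix_diagonal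

/-- given a nilpotent `t×t` matrix `N` over `C_∞`, there is exactly one
continuous `𝔽_r`-algebra homomorphism `φ : K → M_t(C_∞)` with `φ(T) = ι(T)·1 + N`; moreover
its values have the form `φ(x) = ι(x)·1 + N_x` with `N_x` nilpotent, a polynomial in `N` with
coefficients in `ι(K)`. -/
theorem stmt_6 (p m : ℕ) [Fact p.Prime] (hm : 0 < m)
    (Fr : Type*) [Field Fr] [Fintype Fr] (hcard : Fintype.card Fr = p ^ m)
    (C : Type*) [NormedField C] [CompleteSpace C] [IsAlgClosed C] [IsUltrametricDist C]
    [Algebra (LaurentSeries Fr) C] [Algebra Fr C] [IsScalarTower Fr (LaurentSeries Fr) C]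
    (hι : Continuous (algebraMap (LaurentSeries Fr) C))
    (t : ℕ) (ht : 1 ≤ t) (N : Matrix (Fin t) (Fin t) C) (hN : IsNilpotent N) :
    (∃! φ : LaurentSeries Fr →ₐ[Fr] Matrix (Fin t) (Fin t) C,
        Continuous φ ∧
        φ (laurentT Fr) =
          algebraMap (LaurentSeries Fr) (Matrix (Fin t) (Fin t) C) (laurentT Fr) + N) ∧
    ∀ φ : LaurentSeries Fr →ₐ[Fr] Matrix (Fin t) (Fin t) C,
      (Continuous φ ∧
        φ (laurentT Fr) =
          algebraMap (LaurentSeries Fr) (Matrix (Fin t) (Fin t) C) (laurentT Fr) + N) →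
      ∀ x : LaurentSeries Fr,
        IsNilpotent (φ x - algebraMap (LaurentSeries Fr) (Matrix (Fin t) (Fin t) C) x) ∧
        ∃ q : Polynomial (LaurentSeries Fr),
          φ x - algebraMap (LaurentSeries Fr) (Matrix (Fin t) (Fin t) C) x =
            Polynomial.aeval N q :=
  stmt_6_general (continuous_algebraMap_matrix hι) hN
end

section
/- Let R be a commutative ring and let D_n : R[X] → R[X] denote the n-th Hasse derivative. For n ≥ 1, j ≥ 1 let P(n,j) be the finite set of tuples μ = (μ₁,…,μₙ) of nonnegative integers with Σᵢ μᵢ = j and Σᵢ i·μᵢ = n, and for j ≤ m let M_μ(m) := m!/(μ₁!⋯μₙ!·(m−j)!) ∈ ℤ (equivalently m(m−1)⋯(m−j+1)/(μ₁!⋯μₙ!)), an integer (a multinomial coefficient). Then for every f ∈ R[X] and all integers n ≥ 1, m ≥ 1: D_n(f^m) = Σ_{j=1}^{min(n,m)} f^{m−j} · ( Σ_{μ ∈ P(n,j)} M_μ(m) · Π_{i=1}^{n} (D_i f)^{μᵢ} ), where the integers M_μ(m) act on R[X] via the canonical ring map ℤ → R. -/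
open Polynomial

/-- The finite set `P(n,j)` of tuples `μ = (μ₁, …, μₙ)` of nonnegative integers with
`∑ᵢ μᵢ = j` and `∑ᵢ i·μᵢ = n` (indexing: `μ i` stands for `μ_{i+1}`). -/
noncomputable def tuplesPnj (n j : ℕ) : Finset (Fin n → ℕ) :=
  (Fintype.piFinset fun _ : Fin n => Finset.range (n + 1)).filter
    (fun μ => (∑ i : Fin n, μ i) = j ∧ (∑ i : Fin n, (i.1 + 1) * μ i) = n)

/-- The multinomial coefficient `M_μ(m) = m!/(μ₁!⋯μₙ!(m−j)!)`, where `j = ∑ μᵢ`,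
written as `choose m j * j!/(μ₁!⋯μₙ!)`. -/
def Mcoef (m j : ℕ) {n : ℕ} (μ : Fin n → ℕ) : ℕ :=
  m.choose j * Nat.multinomial Finset.univ μ

/-!
The Taylor expansion `f(X + T) = ∑ₙ Dₙ(f) Tⁿ` is multiplicative in `f`, so `Dₙ(fᵐ)` is the
coefficient of `Tⁿ` in `(f + ∑_{i ≥ 1} Dᵢ(f) Tⁱ)ᵐ`. Only the terms with `i ≤ n` contribute to it,
and the formula comes from expanding by the binomial theorem (splitting off the constant term `f`)
and then by the multinomial theorem.
-/

section Tuples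

variable {n j : ℕ} {μ : Fin n → ℕ}

theorem sum_le_sum_succ_mul (μ : Fin n → ℕ) : ∑ i, μ i ≤ ∑ i : Fin n, (i.1 + 1) * μ i :=
  Finset.sum_le_sum fun i _ => Nat.le_mul_of_pos_left (μ i) i.1.succ_pos

theorem mem_tuplesPnj :
    μ ∈ tuplesPnj n j ↔ ∑ i, μ i = j ∧ ∑ i : Fin n, (i.1 + 1) * μ i = n := by
  simp only [tuplesPnj, Finset.mem_filter, Fintype.mem_piFinset, Finset.mem_range,
    and_iff_right_iff_imp]
  rintro ⟨-, hweight⟩ i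
  calc μ i ≤ ∑ i, μ i := Finset.single_le_sum_of_canonicallyOrdered (Finset.mem_univ i)
    _ ≤ ∑ i : Fin n, (i.1 + 1) * μ i := sum_le_sum_succ_mul μ
    _ < n + 1 := by omega

theorem le_of_mem_tuplesPnj (hμ : μ ∈ tuplesPnj n j) : j ≤ n := by
  obtain ⟨rfl, hweight⟩ := mem_tuplesPnj.1 hμ
  exact (sum_le_sum_succ_mul μ).trans_eq hweight

theorem pos_of_mem_tuplesPnj (hn : 0 < n) (hμ : μ ∈ tuplesPnj n j) : 0 < j := by
  obtain ⟨hsum, hweight⟩ := mem_tuplesPnj.1 hμ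
  by_contra! hj
  have hzero : ∀ i, μ i = 0 := by simpa [Nat.le_zero.1 hj] using hsum
  simp only [hzero, mul_zero, Finset.sum_const_zero] at hweight
  omega

theorem tuplesPnj_eq_filter_piAntidiag (n j : ℕ) :
    tuplesPnj n j = 
      {μ ∈ (Finset.univ : Finset (Fin n)).piAntidiag j | ∑ i : Fin n, (i.1 + 1) * μ i = n} := by
  ext μ
  simp [mem_tuplesPnj]

end Tuples

section Polynomial

variable {A : Type*} [CommSemiring A]

theorem coeff_sum_C_mul_X_pow_pow {ι : Type*} [DecidableEq ι] (s : Finset ι) (a : ι → A)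
    (w : ι → ℕ) (n j : ℕ) :
    ((∑ i ∈ s, C (a i) * X ^ w i) ^ j).coeff n =
      ∑ μ ∈ s.piAntidiag j with ∑ i ∈ s, w i * μ i = n,
        (Nat.multinomial s μ : A) * ∏ i ∈ s, a i ^ μ i := by
  have hprod (μ : ι → ℕ) : ∏ i ∈ s, (C (a i) * X ^ w i) ^ μ i =
      C (∏ i ∈ s, a i ^ μ i) * X ^ ∑ i ∈ s, w i * μ i := by
    simp only [mul_pow, Finset.prod_mul_distrib, ← pow_mul, Finset.prod_pow_eq_pow_sum, map_prod,
      map_pow]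
  rw [Finset.sum_pow_eq_sum_piAntidiag, finsetSum_coeff, Finset.sum_filter]
  refine Finset.sum_congr rfl fun μ _ => ?_
  rw [hprod, coeff_natCast_mul, coeff_C_mul_X_pow, mul_ite, mul_zero]
  simp only [eq_comm]

theorem coeff_add_C_pow (q : A[X]) (a : A) (n m : ℕ) :
    ((q + C a) ^ m).coeff n =
      ∑ j ∈ Finset.range (m + 1), a ^ (m - j) * (m.choose j * (q ^ j).coeff n) := by
  rw [add_pow, finsetSum_coeff]
  refine Finset.sum_congr rfl fun j _ => ?_
  rw [← C_pow, coeff_mul_natCast, coeff_mul_C]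
  ring

end Polynomial

section PowerSeries

variable {A : Type*} [CommSemiring A]

theorem coeff_pow_eq_coeff_trunc_pow (p : PowerSeries A) (n m : ℕ) :
    PowerSeries.coeff n (p ^ m) = (PowerSeries.trunc (n + 1) p ^ m).coeff n := by
  rw [← PowerSeries.coeff_coe_trunc_of_lt n.lt_succ_self, ← PowerSeries.trunc_trunc_pow,
    PowerSeries.coeff_coe_trunc_of_lt n.lt_succ_self, ← coe_pow, coeff_coe]

theorem trunc_succ_eq_sum_add_C (p : PowerSeries A) (n : ℕ) :
    PowerSeries.trunc (n + 1) p =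
      ∑ i : Fin n, C (PowerSeries.coeff (i.1 + 1) p) * X ^ (i.1 + 1) +
        C (PowerSeries.coeff 0 p) := by
  rw [PowerSeries.trunc_apply, Nat.Ico_zero_eq_range, Finset.sum_range_succ',
    ← Fin.sum_univ_eq_sum_range fun i => monomial (i + 1) (PowerSeries.coeff (i + 1) p)]
  simp only [C_mul_X_pow_eq_monomial, monomial_zero_left]

theorem coeff_pow_eq_sum_tuplesPnj (p : PowerSeries A) {n : ℕ} (hn : 0 < n) (m : ℕ) :
    PowerSeries.coeff n (p ^ m) =
      ∑ j ∈ Finset.Icc 1 (min n m),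
        PowerSeries.coeff 0 p ^ (m - j) *
          ∑ μ ∈ tuplesPnj n j,
            (Mcoef m j μ : A) * ∏ i : Fin n, PowerSeries.coeff (i.1 + 1) p ^ μ i := by
  have hsubset : Finset.Icc 1 (min n m) ⊆ Finset.range (m + 1) := fun j hj => by
    simp only [Finset.mem_Icc, Finset.mem_range] at hj ⊢
    omega
  have hempty : ∀ j ∈ Finset.range (m + 1), j ∉ Finset.Icc 1 (min n m) → tuplesPnj n j = ∅ := by
    refine fun j hj hj' => Finset.eq_empty_of_forall_notMem fun μ hμ => hj' ?_
    have hpos := pos_of_mem_tuplesPnj hn hμ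
    have hle := le_of_mem_tuplesPnj hμ
    simp only [Finset.mem_Icc, Finset.mem_range] at hj ⊢
    omega
  rw [coeff_pow_eq_coeff_trunc_pow, trunc_succ_eq_sum_add_C, coeff_add_C_pow,
    Finset.sum_subset hsubset fun j hj hj' => by
      rw [hempty j hj hj', Finset.sum_empty, mul_zero]]
  simp only [coeff_sum_C_mul_X_pow_pow, ← tuplesPnj_eq_filter_piAntidiag, Mcoef, Nat.cast_mul,
    Finset.mul_sum, mul_assoc]

end PowerSeries

section HasseDeriv

theorem map_hasseDeriv {R S : Type*} [Semiring R] [Semiring S] (φ : R →+* S) (n : ℕ) (f : R[X]) :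
    (hasseDeriv n f).map φ = hasseDeriv n (f.map φ) := by
  ext k
  simp only [coeff_map, hasseDeriv_coeff, map_mul, map_natCast]

theorem coeff_taylor_X_map_C {R : Type*} [CommSemiring R] (f : R[X]) (n : ℕ) :
    (taylor X (f.map C)).coeff n = hasseDeriv n f := by
  rw [taylor_coeff, ← map_hasseDeriv, eval_map, eval₂_C_X]

end HasseDeriv

theorem stmt_9_general {R : Type*} [CommSemiring R] (f : R[X]) {n : ℕ} (hn : 0 < n) (m : ℕ) :
    hasseDeriv n (f ^ m) =
      ∑ j ∈ Finset.Icc 1 (min n m),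
        f ^ (m - j) *
          ∑ μ ∈ tuplesPnj n j,
            (Mcoef m j μ : R[X]) * ∏ i : Fin n, (hasseDeriv (i.1 + 1) f) ^ (μ i) := by
  have htaylor : hasseDeriv n (f ^ m) =
      PowerSeries.coeff n ((taylor X (f.map C) : PowerSeries R[X]) ^ m) := by
    rw [← coe_pow, coeff_coe, ← taylor_pow, ← Polynomial.map_pow, coeff_taylor_X_map_C]
  rw [htaylor, coeff_pow_eq_sum_tuplesPnj _ hn]
  simp only [coeff_coe, coeff_taylor_X_map_C, hasseDeriv_zero']

/-- the Hasse-derivative power formula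
`D_n(f^m) = ∑_{j=1}^{min(n,m)} f^{m−j} ( ∑_{μ ∈ P(n,j)} M_μ(m) ∏ᵢ (Dᵢ f)^{μᵢ} )`. -/
theorem stmt_9 (R : Type*) [CommRing R] (f : R[X]) (n m : ℕ) (hn : 1 ≤ n) (hm : 1 ≤ m) :
    hasseDeriv n (f ^ m) =
      ∑ j ∈ Finset.Icc 1 (min n m),
        f ^ (m - j) *
          ∑ μ ∈ tuplesPnj n j,
            (Mcoef m j μ : R[X]) * ∏ i : Fin n, (hasseDeriv (i.1 + 1) f) ^ (μ i) :=
  stmt_9_general f hn m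
end
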